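/- For every integer n ≥ 1 one has the quadratic relation 0 = k²·p1(n)² + [2k²(α+β+n−1/2)·β_n − α·k² − β]·p1(n) − k²(α+β+n+3/2)(α+β+n−1/2)·β_n² − [k²(α+β+n+3/2)(α+β+n−1/2)·β_{n+1} − ((β+n+1/2)k² + (α+n+1/2))·(α+β+n−1/2) + k²(α+β+n+1/2)(α+β+n−3/2)·β_{n−1}]·β_n − (n/2)·(n/2 + α + β). -/

import Mathlib

open MeasureTheory

open Polynomial in
/-- `P` is the sequence of monic orthogonal polynomials of the even linear functional `L`, with
squared norms `h`, recurrence coefficients `b` and sub-leading coefficients `p`. -/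
structure IsEvenOrthogonalSequence (L : ℝ[X] →ₗ[ℝ] ℝ) (P : ℕ → ℝ[X]) (h b p : ℕ → ℝ) : Prop where
  even : ∀ q, L (q.comp (-X)) = L q
  monic : ∀ n, (P n).Monic
  natDegree_eq : ∀ n, (P n).natDegree = n
  norm_pos : ∀ n, 0 < h n
  orthogonal : ∀ m n, L (P m * P n) = if m = n then h n else 0
  b_zero : b 0 = 0
  X_mul_of_one_le : ∀ n, 1 ≤ n → X * P n = P (n + 1) + C (b n) * P (n - 1)
  p_eq : ∀ n, p n = (X ^ 2 * P n).coeff n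

namespace IsEvenOrthogonalSequence

open Polynomial

variable {L : ℝ[X] →ₗ[ℝ] ℝ} {P : ℕ → ℝ[X]} {h b p : ℕ → ℝ}

theorem map_C_mul (L : ℝ[X] →ₗ[ℝ] ℝ) (c : ℝ) (q : ℝ[X]) : L (C c * q) = c * L q := by
  rw [← smul_eq_C_mul, map_smul, smul_eq_mul]

theorem coeff_self (H : IsEvenOrthogonalSequence L P h b p) (n : ℕ) : (P n).coeff n = 1 := by
  have := (H.monic n).coeff_natDegree
  rwa [H.natDegree_eq] at this

theorem coeff_of_lt (H : IsEvenOrthogonalSequence L P h b p) {n m : ℕ} (hm : n < m) :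
    (P n).coeff m = 0 :=
  coeff_eq_zero_of_natDegree_lt (by rwa [H.natDegree_eq])

theorem degree_sub_lt (H : IsEvenOrthogonalSequence L P h b p) {q : ℝ[X]} {d : ℕ}
    (hq : q.degree < (d + 1 : ℕ)) : (q - C (q.coeff d) * P d).degree < d := by
  rw [degree_lt_iff_coeff_zero] at hq ⊢
  intro m hm
  rcases hm.eq_or_lt with rfl | hlt
  · simp [H.coeff_self]
  · simp [H.coeff_of_lt hlt, hq m hlt]

theorem map_mul_eq_zero (H : IsEvenOrthogonalSequence L P h b p) {q : ℝ[X]} {n : ℕ}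
    (hq : q.degree < n) : L (q * P n) = 0 := by
  suffices key : ∀ d ≤ n, ∀ q : ℝ[X], q.degree < d → L (q * P n) = 0 from key n le_rfl q hq
  intro d
  induction d with
  | zero =>
    intro _ q hq
    have : q = 0 := by
      rw [← degree_eq_bot]
      simpa using hq
    simp [this]
  | succ d ih =>
    intro hd q hq
    have h1 := ih (by omega) _ (H.degree_sub_lt hq)
    rw [sub_mul, map_sub, mul_assoc, map_C_mul, H.orthogonal, if_neg (by omega)] at h1
    linarith

theorem eq_zero_of_forall_map_mul (H : IsEvenOrthogonalSequence L P h b p) {q : ℝ[X]}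
    (hq : ∀ j, L (q * P j) = 0) : q = 0 := by
  by_contra h0
  have h1 := H.map_mul_eq_zero (H.degree_sub_lt (q := q) (d := q.natDegree)
    (by rw [degree_eq_natDegree h0]; exact_mod_cast Nat.lt_succ_self _))
  rw [sub_mul, map_sub, mul_assoc, map_C_mul, H.orthogonal, if_pos rfl, hq] at h1
  have h2 : q.leadingCoeff ≠ 0 := leadingCoeff_ne_zero.mpr h0
  have h3 := mul_ne_zero h2 (H.norm_pos q.natDegree).ne'
  simp only [leadingCoeff] at h3
  exact h3 (by linarith)

theorem map_eq_zero_of_odd (H : IsEvenOrthogonalSequence L P h b p) {q : ℝ[X]}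
    (hq : q.comp (-X) = -q) : L q = 0 := by
  have h1 := H.even q
  rw [hq, map_neg] at h1
  linarith

theorem P_zero (H : IsEvenOrthogonalSequence L P h b p) : P 0 = 1 :=
  eq_one_of_monic_natDegree_zero (H.monic 0) (H.natDegree_eq 0)

theorem P_one (H : IsEvenOrthogonalSequence L P h b p) : P 1 = X := by
  have h1 : P 1 = X + C ((P 1).coeff 0) := (H.monic 1).eq_X_add_C (H.natDegree_eq 1)
  have h2 := H.orthogonal 1 0
  have h3 := H.orthogonal 0 0
  have h4 : L X = 0 := H.map_eq_zero_of_odd (by simp)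
  rw [h1, H.P_zero, add_mul, map_add, mul_one, map_C_mul, h4] at h2
  rw [H.P_zero, one_mul, if_pos rfl] at h3
  have h5 : (P 1).coeff 0 = 0 := by
    simpa [h3, (H.norm_pos 0).ne'] using h2
  rw [h1, h5]
  simp

theorem X_mul (H : IsEvenOrthogonalSequence L P h b p) (n : ℕ) :
    X * P n = P (n + 1) + C (b n) * P (n - 1) := by
  rcases Nat.eq_zero_or_pos n with rfl | hn
  · simp [H.b_zero, H.P_zero, H.P_one]
  · exact H.X_mul_of_one_le n hn

theorem comp_neg_X (H : IsEvenOrthogonalSequence L P h b p) (n : ℕ) :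
    (P n).comp (-X) = (-1) ^ n * P n := by
  induction n using Nat.twoStepInduction with
  | zero => simp [H.P_zero]
  | one => simp [H.P_one]
  | more n ih0 ih1 =>
    have h1 : P (n + 2) = X * P (n + 1) - C (b (n + 1)) * P n := by
      rw [H.X_mul (n + 1)]
      simp
    rw [h1]
    simp only [sub_comp, mul_comp, X_comp, C_comp, ih0, ih1]
    ring

theorem b_succ_mul (H : IsEvenOrthogonalSequence L P h b p) (n : ℕ) :
    b (n + 1) * h n = h (n + 1) := by
  have h1 : X * P (n + 1) * P n = X * P n * P (n + 1) := by ring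
  have h2 := congrArg L h1
  rw [H.X_mul, H.X_mul, add_mul, add_mul, map_add, map_add, mul_assoc, mul_assoc, map_C_mul,
    map_C_mul, H.orthogonal, H.orthogonal, H.orthogonal, H.orthogonal] at h2
  simpa [show n - 1 ≠ n + 1 by omega, show n + 1 + 1 ≠ n by omega] using h2

theorem coeff_succ_self (H : IsEvenOrthogonalSequence L P h b p) (n : ℕ) :
    (P (n + 1)).coeff n = 0 := by
  induction n with
  | zero => simp [H.P_one]
  | succ n ih =>
    have h1 := congrArg (fun q => q.coeff (n + 1)) (H.X_mul (n + 1))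
    simpa [coeff_X_mul, ih, H.coeff_of_lt (Nat.lt_succ_self n)] using h1.symm

theorem coeff_shift_add_one (H : IsEvenOrthogonalSequence L P h b p) (n : ℕ) :
    (X ^ 2 * P n).coeff (n + 1) = 0 := by
  rcases n with _ | n
  · simp [coeff_X_pow_mul']
  · rw [show n + 1 + 1 = n + 2 from rfl, coeff_X_pow_mul, H.coeff_succ_self]

theorem coeff_shift_add_two (H : IsEvenOrthogonalSequence L P h b p) (n : ℕ) :
    (X ^ 2 * P n).coeff (n + 2) = 1 := by
  rw [coeff_X_pow_mul, H.coeff_self]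

theorem coeff_shift_of_lt (H : IsEvenOrthogonalSequence L P h b p) {n m : ℕ} (hm : n + 2 < m) :
    (X ^ 2 * P n).coeff m = 0 := by
  obtain ⟨j, rfl⟩ : ∃ j, m = j + 2 := ⟨m - 2, by omega⟩
  rw [coeff_X_pow_mul, H.coeff_of_lt (by omega)]

theorem p_sub_p_succ (H : IsEvenOrthogonalSequence L P h b p) (n : ℕ) :
    p n - p (n + 1) = b n := by
  have h1 : X * (X ^ 2 * P n) = X ^ 2 * P (n + 1) + C (b n) * (X ^ 2 * P (n - 1)) := by
    rw [show X * (X ^ 2 * P n) = X ^ 2 * (X * P n) by ring, H.X_mul]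
    ring
  have h2 := congrArg (fun q => q.coeff (n + 1)) h1
  simp only [coeff_X_mul, coeff_add, coeff_C_mul, ← H.p_eq] at h2
  rcases n with _ | n
  · simp only [H.b_zero] at h2 ⊢
    linarith
  · have h3 := H.coeff_shift_add_two n
    simp only [Nat.add_sub_cancel] at h2
    rw [show n + 1 + 1 = n + 2 from rfl, h3] at h2
    rw [show n + 2 = n + 1 + 1 from rfl] at h2
    linarith

/-- The two leading terms of `σ P' + θ P` in the orthogonal basis, for an even quartic `σ` and an
odd cubic `θ`. -/
theorem degree_pearson_sub_lt (H : IsEvenOrthogonalSequence L P h b p) (k t₃ t₁ : ℝ) (n : ℕ) :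
    ((1 - C (1 + k) * X ^ 2 + C k * X ^ 4) * derivative (P n) + (C t₃ * X ^ 3 + C t₁ * X) * P n
      - C (k * n + t₃) * P (n + 3)
      - C (k * (n - 2) * p n - (1 + k) * n + t₃ * p n + t₁ - (k * n + t₃) * p (n + 3))
        * P (n + 1)).degree < ((n + 1 : ℕ) : WithBot ℕ) := by
  set g := k * (n - 2) * p n - (1 + k) * n + t₃ * p n + t₁ - (k * n + t₃) * p (n + 3) with hg
  rw [degree_lt_iff_coeff_zero]
  intro m hm
  obtain ⟨i, rfl⟩ : ∃ i, m = n + i + 1 := ⟨m - (n + 1), by omega⟩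
  have hDX : ∀ (q : ℝ[X]) (j : ℕ), (X * derivative q - 2 * q).coeff j = (j - 2) * q.coeff j := by
    intro q j
    have h2 : (2 : ℝ[X]) = C 2 := rfl
    rw [coeff_sub, h2, coeff_C_mul]
    rcases j with _ | j
    · simp
    · rw [coeff_X_mul, coeff_derivative]
      push_cast
      ring
  rw [← coeff_X_pow_mul _ 3]
  have hexp : X ^ 3 * ((1 - C (1 + k) * X ^ 2 + C k * X ^ 4) * derivative (P n)
      + (C t₃ * X ^ 3 + C t₁ * X) * P n - C (k * n + t₃) * P (n + 3) - C g * P (n + 1))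
      = (X * derivative (X ^ 2 * P n) - 2 * (X ^ 2 * P n))
        - C (1 + k) * (X ^ 2 * (X * derivative (X ^ 2 * P n) - 2 * (X ^ 2 * P n)))
        + C k * (X ^ 4 * (X * derivative (X ^ 2 * P n) - 2 * (X ^ 2 * P n)))
        + C t₃ * (X ^ 4 * (X ^ 2 * P n)) + C t₁ * (X ^ 2 * (X ^ 2 * P n))
        - C (k * n + t₃) * (X * (X ^ 2 * P (n + 3))) - C g * (X * (X ^ 2 * P (n + 1))) := by
    simp only [derivative_mul, derivative_X_pow]
    simp only [Nat.cast_ofNat, map_ofNat]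
    ring
  have e4 : ∀ q : ℝ[X], (X ^ 4 * q).coeff (n + i + 4) = q.coeff (n + i) :=
    fun q => coeff_X_pow_mul q 4 (n + i)
  have e2 : ∀ q : ℝ[X], (X ^ 2 * q).coeff (n + i + 4) = q.coeff (n + i + 2) :=
    fun q => coeff_X_pow_mul q 2 (n + i + 2)
  have e1 : ∀ q : ℝ[X], (X * q).coeff (n + i + 4) = q.coeff (n + i + 3) :=
    fun q => coeff_X_mul q (n + i + 3)
  rw [hexp, show n + i + 1 + 3 = n + i + 4 from rfl]
  rw [coeff_sub, coeff_sub, coeff_add, coeff_add, coeff_add, coeff_sub]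
  simp only [coeff_C_mul]
  rw [e4, e4, e2 (X * _ - _), e2 (X ^ 2 * P n), e1, e1, hDX, hDX, hDX,
    H.coeff_shift_of_lt (n := n) (m := n + i + 4) (by omega)]
  rcases i with _ | _ | _ | i
  · simp only [add_zero, ← H.p_eq, H.coeff_shift_add_two, hg]
    push_cast
    ring
  · rw [show n + (0 + 1) + 3 = (n + 3) + 1 by ring, show n + (0 + 1) = n + 1 by ring,
      H.coeff_shift_add_one, H.coeff_shift_add_one, H.coeff_shift_of_lt (n := n) (by omega),
      H.coeff_shift_of_lt (n := n + 1) (by omega)]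
    ring
  · rw [show n + (0 + 1 + 1) + 3 = (n + 3) + 2 by ring, show n + (0 + 1 + 1) = n + 2 by ring,
      H.coeff_shift_add_two, H.coeff_shift_add_two, H.coeff_shift_of_lt (n := n) (by omega),
      H.coeff_shift_of_lt (n := n + 1) (by omega)]
    push_cast
    ring
  · rw [H.coeff_shift_of_lt (n := n) (by omega), H.coeff_shift_of_lt (n := n) (by omega),
      H.coeff_shift_of_lt (n := n + 1) (by omega), H.coeff_shift_of_lt (n := n + 3) (by omega)]
    ring

theorem map_derivative_mul_self (H : IsEvenOrthogonalSequence L P h b p) (k : ℝ) (n : ℕ) :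
    L ((1 - C (1 + k) * X ^ 2 + C k * X ^ 4) * derivative (P n) * P n) = 0 := by
  apply H.map_eq_zero_of_odd
  have h1 := congrArg derivative (H.comp_neg_X n)
  rw [derivative_comp] at h1
  have h2 : derivative ((-1) ^ n * P n) = (-1) ^ n * derivative (P n) := by
    rw [show ((-1) ^ n : ℝ[X]) = C ((-1) ^ n) by simp, derivative_C_mul]
  rw [h2] at h1
  have h3 : (derivative (P n)).comp (-X) = -((-1) ^ n * derivative (P n)) := by
    rw [← h1]
    simp
  have h4 : ((-1 : ℝ[X]) ^ n) * (-1) ^ n = 1 := by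
    rw [← mul_pow]
    simp
  simp only [mul_comp, add_comp, sub_comp, one_comp, C_comp, pow_comp, X_comp, h3,
    H.comp_neg_X]
  linear_combination
    (-(1 - C (1 + k) * X ^ 2 + C k * X ^ 4) * derivative (P n) * P n) * h4

/-- The structure relation: for a functional satisfying a Pearson equation, `σ Pₙ'` is a
combination of `Pₙ₊₃`, `Pₙ₊₁`, `Pₙ₋₁` and `Pₙ₋₃`. -/
theorem structure_relation (H : IsEvenOrthogonalSequence L P h b p) {k t₃ t₁ : ℝ}
    (hL : ∀ q, L ((1 - C (1 + k) * X ^ 2 + C k * X ^ 4) * derivative q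
      + (C t₃ * X ^ 3 + C t₁ * X) * q) = 0) (n : ℕ) :
    (1 - C (1 + k) * X ^ 2 + C k * X ^ 4) * derivative (P n)
      = C (k * n) * P (n + 3)
        + C (k * (n - 2) * p n - (1 + k) * n - k * n * p (n + 3)) * P (n + 1)
        - C ((k * (n - 3) * p (n - 1) - (1 + k) * (n - 1) + t₃ * p (n - 1) + t₁
            - (k * (n - 1) + t₃) * p (n + 2)) * b n) * P (n - 1)
        - C ((k * (n - 3) + t₃) * (b n * b (n - 1) * b (n - 2))) * P (n - 3) := by
  set σ : ℝ[X] := 1 - C (1 + k) * X ^ 2 + C k * X ^ 4 with hσ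
  rw [← sub_eq_zero]
  apply H.eq_zero_of_forall_map_mul
  intro j
  have hbz := H.b_zero
  -- The pairing of `σ Pₙ'` with `Pⱼ` is read off from the side with the smaller index.
  have upper : n < j → L (σ * derivative (P n) * P j) = k * n * (if n + 3 = j then h j else 0)
      + (k * (n - 2) * p n - (1 + k) * n - k * n * p (n + 3))
        * (if n + 1 = j then h j else 0) := by
    intro hj
    have h1 := H.map_mul_eq_zero (n := j) ((H.degree_pearson_sub_lt k 0 0 n).trans_le
      (by exact_mod_cast hj))
    simp only [map_zero, zero_mul, add_zero, ← hσ] at h1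
    rw [sub_mul, sub_mul, map_sub, map_sub, mul_assoc (C _), mul_assoc (C _), map_C_mul, map_C_mul,
      H.orthogonal, H.orthogonal] at h1
    linarith
  have lower : j < n → L (σ * derivative (P n) * P j)
      = -((k * j + t₃) * (if j + 3 = n then h n else 0)
      + (k * (j - 2) * p j - (1 + k) * j + t₃ * p j + t₁ - (k * j + t₃) * p (j + 3))
        * (if j + 1 = n then h n else 0)) := by
    intro hj
    have h1 := H.map_mul_eq_zero (n := n) ((H.degree_pearson_sub_lt k t₃ t₁ j).trans_le
      (by exact_mod_cast hj))
    rw [← hσ, sub_mul, sub_mul, map_sub, map_sub, mul_assoc (C _) (P _) (P n),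
      mul_assoc (C _) (P _) (P n), map_C_mul, map_C_mul, H.orthogonal, H.orthogonal] at h1
    have h2 := hL (P n * P j)
    rw [derivative_mul, show σ * (derivative (P n) * P j + P n * derivative (P j))
      + (C t₃ * X ^ 3 + C t₁ * X) * (P n * P j) = σ * derivative (P n) * P j
      + (σ * derivative (P j) + (C t₃ * X ^ 3 + C t₁ * X) * P j) * P n by ring, map_add] at h2
    linarith
  have self := H.map_derivative_mul_self k n
  rw [← hσ] at self
  clear_value σ
  rw [sub_mul, sub_mul, sub_mul, add_mul, map_sub, map_sub, map_sub, map_add,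
    mul_assoc (C _) (P _) (P j), mul_assoc (C _) (P _) (P j), mul_assoc (C _) (P _) (P j),
    mul_assoc (C _) (P _) (P j), map_C_mul, map_C_mul, map_C_mul, map_C_mul, H.orthogonal,
    H.orthogonal, H.orthogonal, H.orthogonal]
  rcases lt_trichotomy n j with hj | rfl | hj
  · rw [upper hj, if_neg (show n - 1 ≠ j by omega), if_neg (show n - 3 ≠ j by omega)]
    ring
  · rw [self, if_neg (by omega), if_neg (by omega)]
    rcases n with _ | n
    · simp [hbz]
    · rw [if_neg (by omega), if_neg (by omega)]
      ring
  · rw [lower hj, if_neg (show n + 3 ≠ j by omega), if_neg (show n + 1 ≠ j by omega)]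
    by_cases h1 : j + 1 = n
    · subst h1
      rw [if_neg (show j + 3 ≠ j + 1 by omega), if_pos rfl, Nat.add_sub_cancel, if_pos rfl,
        ← H.b_succ_mul, show j + 1 - 2 = j - 1 by omega, show j + 1 - 3 = j - 2 by omega]
      have h3 : b (j + 1) * b j * b (j - 1) * (if j - 2 = j then h j else 0) = 0 := by
        rcases j with _ | j
        · simp [hbz]
        · rw [if_neg (by omega)]
          ring
      push_cast
      linear_combination (k * ((j : ℝ) + 1 - 3) + t₃) * h3
    · by_cases h3 : j + 3 = n
      · subst h3
        rw [if_pos rfl, if_neg (by omega), if_neg (by omega),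
          show j + 3 - 3 = j by omega, if_pos rfl, show j + 3 - 1 = j + 2 by omega,
          show j + 3 - 2 = j + 1 by omega, ← H.b_succ_mul (j + 2), ← H.b_succ_mul (j + 1),
          ← H.b_succ_mul j]
        push_cast
        ring
      · rw [if_neg h3, if_neg h1, if_neg (by omega)]
        have h4 : b n * b (n - 1) * b (n - 2) * (if n - 3 = j then h j else 0) = 0 := by
          rcases n with _ | _ | _ | n
          · simp [hbz]
          · simp [hbz]
          · simp [hbz]
          · rw [if_neg (by omega)]
            ring
        linear_combination (k * ((n : ℝ) - 3) + t₃) * h4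

/-- The lowering relation at a point `x`, with coefficients free of `bₙ₊₂` and `bₙ₋₁`. -/
theorem eval_lowering (H : IsEvenOrthogonalSequence L P h b p) {k t₃ t₁ : ℝ}
    (hL : ∀ q, L ((1 - C (1 + k) * X ^ 2 + C k * X ^ 4) * derivative q
      + (C t₃ * X ^ 3 + C t₁ * X) * q) = 0) (n : ℕ) (x : ℝ) :
    (1 - (1 + k) * x ^ 2 + k * x ^ 4) * (derivative (P n)).eval x
      = (k * n * x ^ 3 + x * (-2 * k * p n - (1 + k) * n + (k * (2 * n - 3) + t₃) * b n))
          * (P n).eval x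
        + (-(k * (2 * n - 3) + t₃) * x ^ 2 + 4 * k * p n
            - (k * (2 * n - 1) + t₃) * (b n + b (n + 1)) + (1 + k) * (2 * n - 1) - t₁)
          * (x * (P n).eval x - (P (n + 1)).eval x) := by
  have hbz := H.b_zero
  have hrec : ∀ m, x * (P m).eval x = (P (m + 1)).eval x + b m * (P (m - 1)).eval x := by
    intro m
    simpa using congrArg (eval x) (H.X_mul m)
  have h0 := congrArg (eval x) (H.structure_relation hL n)
  simp only [eval_mul, eval_add, eval_sub, eval_one, eval_C, eval_pow, eval_X] at h0
  have r1 := hrec (n + 1)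
  have r2 := hrec (n + 2)
  simp only [Nat.add_sub_cancel, show n + 2 - 1 = n + 1 by omega,
    show n + 1 + 1 = n + 2 from rfl, show n + 2 + 1 = n + 3 from rfl] at r1 r2
  have q0 := H.p_sub_p_succ n
  have q1 := H.p_sub_p_succ (n + 1)
  have q2 := H.p_sub_p_succ (n + 2)
  simp only [show n + 1 + 1 = n + 2 from rfl, show n + 2 + 1 = n + 3 from rfl] at q1 q2
  have hR := hrec n
  have hp : b n * p (n - 1) = b n * (p n + b (n - 1)) := by
    rcases n with _ | n
    · simp [hbz]
    · have := H.p_sub_p_succ n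
      simp only [Nat.add_sub_cancel]
      rw [← this]
      ring
  have hR3 : b n * b (n - 1) * b (n - 2) * (P (n - 3)).eval x
      = x * (x * (b n * (P (n - 1)).eval x) - b n * (P n).eval x)
        - b (n - 1) * (b n * (P (n - 1)).eval x) := by
    rcases n with _ | _ | n
    · simp [hbz]
    · simp [hbz, H.P_zero, H.P_one, mul_comm]
    · have s1 := hrec (n + 1)
      have s0 := hrec n
      simp only [Nat.add_sub_cancel, show n + 1 + 1 = n + 2 from rfl,
        show n + 2 - 1 = n + 1 by omega, show n + 2 - 3 = n - 1 by omega] at s0 s1 ⊢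
      linear_combination (-(b (n + 2) * b (n + 1))) * s0 - x * b (n + 2) * s1
  have hp3 : p (n + 3) = p n - b n - b (n + 1) - b (n + 2) := by linarith
  have hp2 : p (n + 2) = p n - b n - b (n + 1) := by linarith
  have hP1 : (P (n + 1)).eval x = x * (P n).eval x - b n * (P (n - 1)).eval x := by linarith
  have hP2 : (P (n + 2)).eval x = x * (P (n + 1)).eval x - b (n + 1) * (P n).eval x := by linarith
  have hP3 : (P (n + 3)).eval x = x * (P (n + 2)).eval x - b (n + 2) * (P (n + 1)).eval x := by
    linarith
  rw [hP3, hP2, hP1, hp3, hp2] at h0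
  rw [hP1]
  linear_combination h0 - (k * (n - 3) + t₃) * hR3 - (k * (n - 3) + t₃) * (P (n - 1)).eval x * hp

theorem b_succ_pos (H : IsEvenOrthogonalSequence L P h b p) (n : ℕ) : 0 < b (n + 1) :=
  pos_of_mul_pos_left ((H.b_succ_mul n).symm ▸ H.norm_pos (n + 1)) (H.norm_pos n).le

theorem eval_ne_zero_or (H : IsEvenOrthogonalSequence L P h b p) (n : ℕ) (x : ℝ) :
    (P (n + 1)).eval x ≠ 0 ∨ (P n).eval x ≠ 0 := by
  induction n with
  | zero => right; simp [H.P_zero]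
  | succ n ih =>
    by_contra! hc
    have h1 := congrArg (eval x) (H.X_mul (n + 1))
    simp only [eval_mul, eval_add, eval_C, eval_X, Nat.add_sub_cancel] at h1
    rw [hc.1, hc.2] at h1
    have h2 : (P n).eval x = 0 := by simpa [(H.b_succ_pos n).ne'] using h1.symm
    exact ih.elim (fun h => h hc.2) fun h => h h2

/-- The matrix of the lowering relations is singular at the zeros of `σ`. -/
theorem lowering_det_eq_zero (H : IsEvenOrthogonalSequence L P h b p) {k t₃ t₁ : ℝ}
    (hL : ∀ q, L ((1 - C (1 + k) * X ^ 2 + C k * X ^ 4) * derivative q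
      + (C t₃ * X ^ 3 + C t₁ * X) * q) = 0) (n : ℕ) {x : ℝ}
    (hx : 1 - (1 + k) * x ^ 2 + k * x ^ 4 = 0) :
    (k * (n + 1) * x ^ 3 + x * (-2 * k * p (n + 1) - (1 + k) * (n + 1)
          + (k * (2 * n - 1) + t₃) * b (n + 1)))
        * ((k * n * x ^ 3 + x * (-2 * k * p n - (1 + k) * n + (k * (2 * n - 3) + t₃) * b n))
          + x * (-(k * (2 * n - 3) + t₃) * x ^ 2 + 4 * k * p n
            - (k * (2 * n - 1) + t₃) * (b n + b (n + 1)) + (1 + k) * (2 * n - 1) - t₁))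
      + b (n + 1)
        * (-(k * (2 * n - 1) + t₃) * x ^ 2 + 4 * k * p (n + 1)
            - (k * (2 * n + 1) + t₃) * (b (n + 1) + b (n + 2)) + (1 + k) * (2 * n + 1) - t₁)
        * (-(k * (2 * n - 3) + t₃) * x ^ 2 + 4 * k * p n
            - (k * (2 * n - 1) + t₃) * (b n + b (n + 1)) + (1 + k) * (2 * n - 1) - t₁) = 0 := by
  have e0 := H.eval_lowering hL n x
  have e1 := H.eval_lowering hL (n + 1) x
  have hr := congrArg (eval x) (H.X_mul (n + 1))
  simp only [eval_mul, eval_add, eval_C, eval_X, Nat.add_sub_cancel] at hr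
  rw [hr, add_sub_cancel_left] at e1
  rw [hx, zero_mul] at e0 e1
  push_cast at e1
  rw [show n + 1 + 1 = n + 2 from rfl] at e1
  generalize -(k * (2 * (n : ℝ) - 3) + t₃) * x ^ 2 + 4 * k * p n
    - (k * (2 * n - 1) + t₃) * (b n + b (n + 1)) + (1 + k) * (2 * n - 1) - t₁ = V at *
  generalize k * (n : ℝ) * x ^ 3 + x * (-2 * k * p n - (1 + k) * n
    + (k * (2 * n - 3) + t₃) * b n) = U at *
  rcases H.eval_ne_zero_or n x with hu | hu
  · apply (mul_eq_zero.mp (_ : _ * (P (n + 1)).eval x = 0)).resolve_right hu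
    linear_combination (-(U + x * V)) * e1 + b (n + 1) * (-(k * (2 * n - 1) + t₃) * x ^ 2
      + 4 * k * p (n + 1) - (k * (2 * n + 1) + t₃) * (b (n + 1) + b (n + 2))
      + (1 + k) * (2 * n + 1) - t₁) * e0
  · apply (mul_eq_zero.mp (_ : _ * (P n).eval x = 0)).resolve_right hu
    linear_combination (-V) * e1 - (k * (n + 1) * x ^ 3 + x * (-2 * k * p (n + 1)
      - (1 + k) * (n + 1) + (k * (2 * n - 1) + t₃) * b (n + 1))) * e0

theorem quadratic_relation (H : IsEvenOrthogonalSequence L P h b p) {α β k : ℝ}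
    (hk : k ∈ Set.Ioo (0 : ℝ) 1)
    (hL : ∀ q, L ((1 - C (1 + k) * X ^ 2 + C k * X ^ 4) * derivative q
      + (C (k * (4 + 2 * α + 2 * β)) * X ^ 3
        + C (-(2 * (1 + k) + 2 * α + 2 * β * k)) * X) * q) = 0) (n : ℕ) :
    0 = k * p (n + 1) ^ 2
        + (2 * k * (α + β + (n + 1) - 1/2) * b (n + 1) - α * k - β) * p (n + 1)
        - k * (α + β + (n + 1) + 3/2) * (α + β + (n + 1) - 1/2) * b (n + 1) ^ 2
        - (k * (α + β + (n + 1) + 3/2) * (α + β + (n + 1) - 1/2) * b (n + 2)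
            - ((β + (n + 1) + 1/2) * k + (α + (n + 1) + 1/2)) * (α + β + (n + 1) - 1/2)
            + k * (α + β + (n + 1) + 1/2) * (α + β + (n + 1) - 3/2) * b n) * b (n + 1)
        - ((n + 1 : ℝ)/2) * ((n + 1 : ℝ)/2 + α + β) := by
  obtain ⟨hk0, hk1⟩ := hk
  obtain ⟨s, hs, rfl⟩ : ∃ s : ℝ, 0 < s ∧ k = (s ^ 2)⁻¹ :=
    ⟨(Real.sqrt k)⁻¹, by positivity, by rw [inv_pow, Real.sq_sqrt hk0.le, inv_inv]⟩
  have d1 := H.lowering_det_eq_zero hL n (x := 1) (by ring)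
  have d2 := H.lowering_det_eq_zero hL n (x := s) (by field_simp; ring)
  rw [show p n = p (n + 1) + b n by linarith [H.p_sub_p_succ n]] at d1 d2
  have h4 : 4 * (1 - (s ^ 2)⁻¹) ≠ 0 := by
    have : 0 < 1 - (s ^ 2)⁻¹ := by linarith
    positivity
  apply mul_left_cancel₀ h4
  rw [mul_zero]
  generalize p (n + 1) = p₁ at *
  generalize b (n + 1) = b₁ at *
  generalize b (n + 2) = b₂ at *
  generalize b n = b₀ at *
  generalize (n : ℝ) = N at *
  have hs0 := hs.ne'
  rw [← sub_eq_zero.mpr (d1.trans d2.symm)]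
  field_simp
  ring

end IsEvenOrthogonalSequence

section Weight

open Polynomial

theorem intervalIntegrable_eval_mul {w : ℝ → ℝ} (hw : IntervalIntegrable w volume (-1) 1)
    (q : ℝ[X]) : IntervalIntegrable (fun x => q.eval x * w x) volume (-1) 1 :=
  hw.continuousOn_mul q.continuous.continuousOn

/-- The moment functional `q ↦ ∫ q w` of an integrable weight on `[-1, 1]`. -/
noncomputable def momentFunctional (w : ℝ → ℝ) (hw : IntervalIntegrable w volume (-1) 1) :
    ℝ[X] →ₗ[ℝ] ℝ where
  toFun q := ∫ x in (-1 : ℝ)..1, q.eval x * w x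
  map_add' q r := by
    simp only [eval_add, add_mul]
    exact intervalIntegral.integral_add (intervalIntegrable_eval_mul hw q)
      (intervalIntegrable_eval_mul hw r)
  map_smul' c q := by
    simp only [eval_smul, smul_eq_mul, mul_assoc, RingHom.id_apply]
    exact intervalIntegral.integral_const_mul c _

theorem momentFunctional_comp_neg_X {w : ℝ → ℝ} (hw : IntervalIntegrable w volume (-1) 1)
    (heven : ∀ x, w (-x) = w x) (q : ℝ[X]) :
    momentFunctional w hw (q.comp (-X)) = momentFunctional w hw q := by
  change ∫ x in (-1 : ℝ)..1, (q.comp (-X)).eval x * w x = ∫ x in (-1 : ℝ)..1, q.eval x * w x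
  have h1 := intervalIntegral.integral_comp_neg (a := -1) (b := 1) fun x => q.eval x * w x
  rw [neg_neg] at h1
  rw [← h1]
  simp [heven]

theorem one_sub_mul_sq_pos {k x : ℝ} (hk : k ∈ Set.Ioo (0 : ℝ) 1) (hx : x ∈ Set.Icc (-1 : ℝ) 1) :
    0 < 1 - k * x ^ 2 := by
  have h1 : x ^ 2 ≤ 1 := (sq_le_one_iff_abs_le_one x).mpr (abs_le.mpr hx)
  nlinarith [hk.1, hk.2]

/-- The Pearson equation of the weight `(1 - x²)^α (1 - k x²)^β`. -/
theorem momentFunctional_pearson {α β k : ℝ} (hα : -1 < α) (hk : k ∈ Set.Ioo (0 : ℝ) 1)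
    {w : ℝ → ℝ} (hw : ∀ x, w x = (1 - x ^ 2) ^ α * (1 - k * x ^ 2) ^ β)
    (hint : IntervalIntegrable w volume (-1) 1) (q : ℝ[X]) :
    momentFunctional w hint ((1 - C (1 + k) * X ^ 2 + C k * X ^ 4) * derivative q
      + (C (k * (4 + 2 * α + 2 * β)) * X ^ 3
        + C (-(2 * (1 + k) + 2 * α + 2 * β * k)) * X) * q) = 0 := by
  set r := (1 - C (1 + k) * X ^ 2 + C k * X ^ 4) * derivative q
      + (C (k * (4 + 2 * α + 2 * β)) * X ^ 3
        + C (-(2 * (1 + k) + 2 * α + 2 * β * k)) * X) * q with hr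
  have hα' : 0 < α + 1 := by linarith
  have hcont : ContinuousOn (fun x : ℝ => (1 - x ^ 2) ^ (α + 1) * (1 - k * x ^ 2) ^ (β + 1)
      * q.eval x) (Set.Icc (-1) 1) := by
    refine (ContinuousOn.mul ?_ ?_).mul q.continuous.continuousOn
    · exact ContinuousOn.rpow_const (by fun_prop) fun x _ => Or.inr hα'.le
    · exact ContinuousOn.rpow_const (by fun_prop) fun x hx =>
        Or.inl (one_sub_mul_sq_pos hk hx).ne'
  have hderiv : ∀ x ∈ Set.Ioo (-1 : ℝ) 1, HasDerivAt (fun x : ℝ => (1 - x ^ 2) ^ (α + 1)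
      * (1 - k * x ^ 2) ^ (β + 1) * q.eval x) (r.eval x * w x) x := by
    intro x hx
    have p1 : 0 < 1 - x ^ 2 := by nlinarith [hx.1, hx.2]
    have p2 := one_sub_mul_sq_pos hk (Set.Ioo_subset_Icc_self hx)
    have d1 : HasDerivAt (fun x : ℝ => 1 - x ^ 2) (-(2 * x)) x := by
      simpa using (hasDerivAt_pow 2 x).const_sub 1
    have d2 : HasDerivAt (fun x : ℝ => 1 - k * x ^ 2) (-(k * (2 * x))) x := by
      simpa using ((hasDerivAt_pow 2 x).const_mul k).const_sub 1
    have d3 := ((d1.rpow_const (p := α + 1) (Or.inl p1.ne')).mul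
      (d2.rpow_const (p := β + 1) (Or.inl p2.ne'))).mul (q.hasDerivAt x)
    refine d3.congr_deriv ?_
    simp only [add_sub_cancel_right, hw, hr, eval_add, eval_sub, eval_mul, eval_one, eval_C,
      eval_pow, eval_X, Pi.mul_apply]
    rw [Real.rpow_add_one p1.ne', Real.rpow_add_one p2.ne']
    ring
  have h1 := intervalIntegral.integral_eq_sub_of_hasDerivAt_of_le (by norm_num) hcont hderiv
    (intervalIntegrable_eval_mul hint r)
  change ∫ x in (-1 : ℝ)..1, r.eval x * w x = 0
  rw [h1]
  simp [Real.zero_rpow hα'.ne']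

end Weight

/-- For the weight `w(x) = (1-x²)^α (1-k²x²)^β` on `[-1,1]`, the
sub-leading coefficient `p1(n)` and the recurrence coefficients `β_n` of the monic
orthogonal polynomials satisfy a quadratic difference relation. -/
theorem stmt_0
    (α β k2 : ℝ) (hα : -1 < α) (hk2 : k2 ∈ Set.Ioo (0:ℝ) 1)
    (w : ℝ → ℝ)
    (hw : ∀ x : ℝ, w x = (1 - x ^ 2) ^ α * (1 - k2 * x ^ 2) ^ β)
    (P : ℕ → Polynomial ℝ)
    (hPmonic : ∀ n, (P n).Monic)
    (hPdeg : ∀ n, (P n).natDegree = n)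
    (h : ℕ → ℝ) (hpos : ∀ n, 0 < h n)
    (horth : ∀ m n : ℕ,
      (∫ x in (-1:ℝ)..1, (P m).eval x * (P n).eval x * w x)
        = if m = n then h n else 0)
    (b : ℕ → ℝ) (hb0 : b 0 = 0)
    (hrec : ∀ n : ℕ, 1 ≤ n →
      Polynomial.X * P n = P (n + 1) + Polynomial.C (b n) * P (n - 1))
    (p1 : ℕ → ℝ) (hp10 : p1 0 = 0) (hp11 : p1 1 = 0)
    (hp1 : ∀ n : ℕ, 2 ≤ n → p1 n = (P n).coeff (n - 2)) :
    ∀ n : ℕ, 1 ≤ n →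
      0 = k2 * p1 n ^ 2
        + (2 * k2 * (α + β + (n:ℝ) - 1/2) * b n - α * k2 - β) * p1 n
        - k2 * (α + β + (n:ℝ) + 3/2) * (α + β + (n:ℝ) - 1/2) * b n ^ 2
        - (k2 * (α + β + (n:ℝ) + 3/2) * (α + β + (n:ℝ) - 1/2) * b (n + 1)
            - ((β + (n:ℝ) + 1/2) * k2 + (α + (n:ℝ) + 1/2)) * (α + β + (n:ℝ) - 1/2)
            + k2 * (α + β + (n:ℝ) + 1/2) * (α + β + (n:ℝ) - 3/2) * b (n - 1)) * b n
        - ((n:ℝ)/2) * ((n:ℝ)/2 + α + β) := by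
  have hP0 : P 0 = 1 := Polynomial.eq_one_of_monic_natDegree_zero (hPmonic 0) (hPdeg 0)
  have hint : IntervalIntegrable w volume (-1) 1 := by
    by_contra hni
    have h1 := horth 0 0
    simp only [hP0, Polynomial.eval_one, one_mul, if_true] at h1
    rw [intervalIntegral.integral_undef hni] at h1
    exact (hpos 0).ne h1
  have H : IsEvenOrthogonalSequence (momentFunctional w hint) P h b p1 :=
    { even := momentFunctional_comp_neg_X hint fun x => by simp [hw]
      monic := hPmonic
      natDegree_eq := hPdeg
      norm_pos := hpos
      orthogonal := fun m n => by
        rw [← horth m n]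
        simp [momentFunctional]
      b_zero := hb0
      X_mul_of_one_le := hrec
      p_eq := fun n => by
        rcases n with _ | _ | n
        · simp [hp10]
        · simp [hp11, Polynomial.coeff_X_pow_mul']
        · rw [hp1 _ (by omega), Polynomial.coeff_X_pow_mul, show n + 1 + 1 - 2 = n by omega] }
  intro n hn
  obtain ⟨m, rfl⟩ : ∃ m, n = m + 1 := ⟨n - 1, by omega⟩
  have := H.quadratic_relation hk2 (momentFunctional_pearson hα hk2 hw hint) m
  push_cast
  exact this
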